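/- Let 0 < a < b. Then there exist functions w₊, w₋ : [a,b] → ℝ, twice continuously differentiable on [a,b], such that: w₊'(a) = 0, w₊(b) = 0, w₊(r) > 0 for all r ∈ [a,b), and −𝓕(r, w₊''(r), w₊'(r)/r) = w₊(r)^p for all r ∈ (a,b); and w₋'(a) = 0, w₋(b) = 0, w₋(r) < 0 for all r ∈ [a,b), and −𝓕(r, w₋''(r), w₋'(r)/r) = −|w₋(r)|^p for all r ∈ (a,b). (Equivalently: the mixed boundary value problem F(x,D²u) + |u|^{p−1}u = 0 in the annulus A_{a,b}, ∂u/∂n = 0 on |x| = a, u = 0 on |x| = b, has a positive and a negative radial solution.) -/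

import Mathlib

open Real Set

/-- Uniform ellipticity of the radial form `𝓕(r, m, l)` of a uniformly elliptic operator. -/
def UnifElliptic (n : ℕ) (lam Lam : ℝ) (F : ℝ → ℝ → ℝ → ℝ) : Prop :=
  ∀ r : ℝ, 0 < r → ∀ m l s t : ℝ, 0 ≤ s → 0 ≤ t →
    lam * (s + ((n : ℝ) - 1) * t) ≤ F r (m + s) (l + t) - F r m l ∧
      F r (m + s) (l + t) - F r m l ≤ Lam * (s + ((n : ℝ) - 1) * t)

/-! Shooting from `r = a`. Solving the equation for the second derivative turns the problem with
`w(a) = s`, `w'(a) = 0` into an initial value problem with a Lipschitz right-hand side, whose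
solutions are nonincreasing and satisfy `-f(w)/λ ≤ w'' ≤ -κ w' - f(w)/Λ`. For small `s`, the lower
bound and `f(s) = o(s)` leave `w` no room to drop to zero before `b`. For large `s`, the upper bound
prevents `w` from falling faster than it later has to, so `w` stays comparable to `s` on the first
half of `[a, b]`, where `s = o(f(s))` makes it so concave that `w(b) < 0`. Some intermediate `s`
gives `w(b) = 0`; the integrating factor `exp(κ r)` rules out an earlier zero. The negative solution
is minus the positive solution for the operator `-F(r, -m, -l)`. -/

section MeanValue

variable {f f' : ℝ → ℝ} {x y C : ℝ}

theorem sub_le_mul_sub_of_hasDerivAt_le (hxy : x ≤ y)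
    (hf : ∀ t ∈ Icc x y, HasDerivAt f (f' t) t) (hC : ∀ t ∈ Icc x y, f' t ≤ C) :
    f y - f x ≤ C * (y - x) := by
  refine (convex_Icc x y).image_sub_le_mul_sub_of_deriv_le
    (fun t ht => (hf t ht).continuousAt.continuousWithinAt)
    (fun t ht => (hf t (interior_subset ht)).differentiableAt.differentiableWithinAt)
    (fun t ht => ?_) x (left_mem_Icc.2 hxy) y (right_mem_Icc.2 hxy) hxy
  rw [(hf t (interior_subset ht)).deriv]
  exact hC t (interior_subset ht)

theorem mul_sub_le_sub_of_le_hasDerivAt (hxy : x ≤ y)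
    (hf : ∀ t ∈ Icc x y, HasDerivAt f (f' t) t) (hC : ∀ t ∈ Icc x y, C ≤ f' t) :
    C * (y - x) ≤ f y - f x := by
  have := sub_le_mul_sub_of_hasDerivAt_le hxy (fun t ht => (hf t ht).neg)
    fun t ht => neg_le_neg (hC t ht)
  simp only [Pi.neg_apply] at this
  linarith

theorem antitoneOn_Icc_of_hasDerivAt_nonpos (hf : ∀ t ∈ Icc x y, HasDerivAt f (f' t) t)
    (hf' : ∀ t ∈ Icc x y, f' t ≤ 0) : AntitoneOn f (Icc x y) :=
  antitoneOn_of_hasDerivWithinAt_nonpos (convex_Icc x y)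
    (fun t ht => (hf t ht).continuousAt.continuousWithinAt)
    (fun t ht => (hf t (interior_subset ht)).hasDerivWithinAt)
    (fun t ht => hf' t (interior_subset ht))

theorem nonpos_of_hasDerivAt_nonpos_of_nonneg (hf : ∀ t ∈ Icc x y, HasDerivAt f (f' t) t)
    (hx : f x ≤ 0) (hf' : ∀ t ∈ Icc x y, 0 ≤ f t → f' t ≤ 0) : ∀ t ∈ Icc x y, f t ≤ 0 := by
  intro t ht
  have le_linear (ε : ℝ) (hε : 0 < ε) : f t ≤ ε * (t - x + 1) := by
    refine image_le_of_deriv_right_lt_deriv_boundary (f' := f') (B' := fun _ => ε)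
      (B := fun s => ε * (s - x + 1)) (fun s hs => (hf s hs).continuousAt.continuousWithinAt)
      (fun s hs => (hf s (Ico_subset_Icc_self hs)).hasDerivWithinAt) (by simp; linarith)
      (fun s => by simpa using (((hasDerivAt_id s).sub_const x).add_const 1).const_mul ε)
      (fun s hs hfs => ?_) ht
    have : 0 ≤ f s := by
      rw [hfs]
      have := hs.1
      exact mul_nonneg hε.le (by linarith)
    exact (hf' s (Ico_subset_Icc_self hs) this).trans_lt hε
  by_contra! hpos
  have hden : 0 < t - x + 2 := by linarith [ht.1]
  have := le_linear (f t / (t - x + 2)) (by positivity)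
  rw [div_mul_eq_mul_div, le_div_iff₀ hden] at this
  linarith

end MeanValue

section DecreasingProfile

variable {w u g : ℝ → ℝ} {a b κ q : ℝ}

theorem exp_mul_le_sub_of_hasDerivAt_le (hab : a ≤ b) (hκ : 0 ≤ κ) (hq : 0 ≤ q)
    (hu : ∀ r ∈ Icc a b, HasDerivAt u (g r) r) (hg : ∀ r ∈ Icc a b, g r ≤ -(κ * u r) - q) :
    exp (κ * (b - a)) * u b ≤ u a - q * (b - a) := by
  have hderiv (r : ℝ) (hr : r ∈ Icc a b) : HasDerivAt (fun r => exp (κ * (r - a)) * u r)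
      (exp (κ * (r - a)) * κ * u r + exp (κ * (r - a)) * g r) r := by
    have : HasDerivAt (fun r => κ * (r - a)) κ r := by
      simpa using ((hasDerivAt_id r).sub_const a).const_mul κ
    exact this.exp.mul (hu r hr)
  have := sub_le_mul_sub_of_hasDerivAt_le (C := -q) hab hderiv fun r hr => by
    have h_exp : 1 ≤ exp (κ * (r - a)) := one_le_exp (mul_nonneg hκ (sub_nonneg.2 hr.1))
    calc _ = exp (κ * (r - a)) * (κ * u r + g r) := by ring
      _ ≤ exp (κ * (r - a)) * -q := by gcongr; linarith [hg r hr]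
      _ ≤ -q := by nlinarith
  simp only [sub_self, mul_zero, exp_zero, one_mul] at this
  linarith

theorem exp_mul_le_sub_of_mem_Icc (hκ : 0 ≤ κ) (hq : 0 ≤ q)
    (hu : ∀ r ∈ Icc a b, HasDerivAt u (g r) r) (hu0 : ∀ r ∈ Icc a b, u r ≤ 0)
    (hg : ∀ r ∈ Icc a b, g r ≤ -(κ * u r) - q) {x y : ℝ} (hx : x ∈ Icc a b) (hy : y ∈ Icc a b)
    (hxy : x ≤ y) : exp (κ * (b - a)) * u y ≤ u x - q * (y - x) := by
  have hsub : Icc x y ⊆ Icc a b := Icc_subset_Icc hx.1 hy.2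
  have h_exp : exp (κ * (y - x)) ≤ exp (κ * (b - a)) := by
    gcongr
    exacts [hy.2, hx.1]
  exact (mul_le_mul_of_nonpos_right h_exp (hu0 y hy)).trans <|
    exp_mul_le_sub_of_hasDerivAt_le hxy hκ hq (fun r hr => hu r (hsub hr))
      fun r hr => hg r (hsub hr)

theorem sub_le_mul_sq_of_neg_le {C : ℝ} (hab : a ≤ b) (hC : 0 ≤ C) (hua : u a = 0)
    (hw : ∀ r ∈ Icc a b, HasDerivAt w (u r) r) (hu : ∀ r ∈ Icc a b, HasDerivAt u (g r) r)
    (hg : ∀ r ∈ Icc a b, -C ≤ g r) : w a - w b ≤ C * (b - a) ^ 2 := by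
  have slope_ge (r : ℝ) (hr : r ∈ Icc a b) : -C * (b - a) ≤ u r := by
    have hsub : Icc a r ⊆ Icc a b := Icc_subset_Icc_right hr.2
    have := mul_sub_le_sub_of_le_hasDerivAt hr.1 (fun t ht => hu t (hsub ht))
      fun t ht => hg t (hsub ht)
    nlinarith [hr.2]
  linarith [mul_sub_le_sub_of_le_hasDerivAt hab hw slope_ge]

theorem mul_sq_div_le_sub (hab : a ≤ b) (hκ : 0 ≤ κ) (hq : 0 ≤ q) (hua : u a = 0)
    (hw : ∀ r ∈ Icc a b, HasDerivAt w (u r) r) (hu : ∀ r ∈ Icc a b, HasDerivAt u (g r) r)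
    (hu0 : ∀ r ∈ Icc a b, u r ≤ 0) (hg : ∀ r ∈ Icc a b, g r ≤ -(κ * u r) - q) :
    q * (b - a) ^ 2 / (4 * exp (κ * (b - a))) ≤ w a - w b := by
  set E := exp (κ * (b - a))
  have hE : 0 < E := exp_pos _
  have ha : a ∈ Icc a b := left_mem_Icc.2 hab
  have hmid : (a + b) / 2 ∈ Icc a b := ⟨by linarith, by linarith⟩
  have slope_le (r : ℝ) (hr : r ∈ Icc ((a + b) / 2) b) :
      u r ≤ -(q * ((b - a) / 2)) / E := by
    have hr' : r ∈ Icc a b := ⟨hmid.1.trans hr.1, hr.2⟩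
    have hra : (b - a) / 2 ≤ r - a := by linarith [hr.1]
    have := exp_mul_le_sub_of_mem_Icc hκ hq hu hu0 hg ha hr' hr'.1
    rw [le_div_iff₀ hE]
    nlinarith
  have drop := sub_le_mul_sub_of_hasDerivAt_le hmid.2 (fun r hr => hw r ⟨hmid.1.trans hr.1, hr.2⟩)
    slope_le
  have hanti := antitoneOn_Icc_of_hasDerivAt_nonpos hw hu0 ha hmid hmid.1
  have : -(q * ((b - a) / 2)) / E * (b - (a + b) / 2) = -(q * (b - a) ^ 2 / (4 * E)) := by
    field_simp
    ring
  linarith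

theorem div_le_midpoint_of_nonneg_right (hab : a ≤ b) (hκ : 0 ≤ κ)
    (hw : ∀ r ∈ Icc a b, HasDerivAt w (u r) r) (hu : ∀ r ∈ Icc a b, HasDerivAt u (g r) r)
    (hu0 : ∀ r ∈ Icc a b, u r ≤ 0) (hg : ∀ r ∈ Icc a b, g r ≤ -(κ * u r)) (hwb : 0 ≤ w b) :
    w a / (1 + exp (κ * (b - a)) ^ 2) ≤ w ((a + b) / 2) := by
  set E := exp (κ * (b - a))
  set m := (a + b) / 2 with hm_eq
  have hE : 0 < E := exp_pos _
  have hm : m ∈ Icc a b := ⟨by linarith, by linarith⟩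
  have slope_le {x y : ℝ} (hx : x ∈ Icc a b) (hy : y ∈ Icc a b) (hxy : x ≤ y) :
      E * u y ≤ u x := by
    simpa using exp_mul_le_sub_of_mem_Icc hκ le_rfl hu hu0 (by simpa using hg) hx hy hxy
  have drop_left : E * u m * (m - a) ≤ w m - w a :=
    mul_sub_le_sub_of_le_hasDerivAt hm.1 (fun r hr => hw r ⟨hr.1, hr.2.trans hm.2⟩)
      fun r hr => slope_le ⟨hr.1, hr.2.trans hm.2⟩ hm hr.2
  have drop_right : w b - w m ≤ u m / E * (b - m) :=
    sub_le_mul_sub_of_hasDerivAt_le hm.2 (fun r hr => hw r ⟨hm.1.trans hr.1, hr.2⟩)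
      fun r hr => by
        rw [le_div_iff₀' hE]
        exact slope_le hm ⟨hm.1.trans hr.1, hr.2⟩ hr.1
  have drop_right' : E ^ 2 * (w b - w m) ≤ E * u m * (b - m) := by
    calc E ^ 2 * (w b - w m) ≤ E ^ 2 * (u m / E * (b - m)) := by gcongr
      _ = E * u m * (b - m) := by field_simp
  rw [div_le_iff₀ (by positivity)]
  have hhalf : m - a = b - m := by linarith
  rw [hhalf] at drop_left
  nlinarith [mul_nonneg (sq_nonneg E) hwb]

theorem right_neg_of_mul_le {φ : ℝ → ℝ} {A : ℝ} (hab : a ≤ b) (hκ : 0 ≤ κ) (hua : u a = 0)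
    (hw : ∀ r ∈ Icc a b, HasDerivAt w (u r) r) (hu : ∀ r ∈ Icc a b, HasDerivAt u (g r) r)
    (hu0 : ∀ r ∈ Icc a b, u r ≤ 0) (hφ : ∀ s, 0 ≤ φ s)
    (hg : ∀ r ∈ Icc a b, g r ≤ -(κ * u r) - φ (w r)) (hwa : 0 < w a)
    (hA : 16 * exp (κ * (b - a)) * (1 + exp (κ * (b - a)) ^ 2) < A * (b - a) ^ 2)
    (hAφ : ∀ s ∈ Icc (w a / (1 + exp (κ * (b - a)) ^ 2)) (w a), A * s ≤ φ s) : w b < 0 := by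
  by_contra! hwb
  set E := exp (κ * (b - a))
  set m := (a + b) / 2 with hm_eq
  have hE : 0 < E := exp_pos _
  have hA0 : 0 < A := pos_of_mul_pos_left ((by positivity : (0 : ℝ) < _).trans hA) (sq_nonneg _)
  have hm : m ∈ Icc a b := ⟨by linarith, by linarith⟩
  have hma : m - a = (b - a) / 2 := by linarith
  have hsub : Icc a m ⊆ Icc a b := Icc_subset_Icc_right hm.2
  have hanti : AntitoneOn w (Icc a b) := antitoneOn_Icc_of_hasDerivAt_nonpos hw hu0
  have hwm : w a / (1 + E ^ 2) ≤ w m := div_le_midpoint_of_nonneg_right hab hκ hw hu hu0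
    (fun r hr => (hg r hr).trans (sub_le_self _ (hφ _))) hwb
  have hφ_ge (r : ℝ) (hr : r ∈ Icc a m) : A * (w a / (1 + E ^ 2)) ≤ φ (w r) := by
    have hwr : w a / (1 + E ^ 2) ≤ w r := hwm.trans (hanti (hsub hr) hm hr.2)
    exact (mul_le_mul_of_nonneg_left hwr hA0.le).trans <|
      hAφ _ ⟨hwr, hanti (left_mem_Icc.2 hab) (hsub hr) hr.1⟩
  have drop := mul_sq_div_le_sub (w := w) (q := A * (w a / (1 + E ^ 2))) hm.1 hκ (by positivity)
    hua (fun r hr => hw r (hsub hr)) (fun r hr => hu r (hsub hr)) (fun r hr => hu0 r (hsub hr))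
    fun r hr => (hg r (hsub hr)).trans (by linarith [hφ_ge r hr])
  have h_exp : exp (κ * (m - a)) ≤ E :=
    exp_le_exp.2 (mul_le_mul_of_nonneg_left (sub_le_sub_right hm.2 a) hκ)
  have : w a < w a := calc
    w a < w a * (A * (b - a) ^ 2 / (16 * E * (1 + E ^ 2))) :=
      lt_mul_of_one_lt_right hwa ((one_lt_div (by positivity)).2 hA)
    _ = A * (w a / (1 + E ^ 2)) * (m - a) ^ 2 / (4 * E) := by
      rw [hma]
      field_simp
      ring
    _ ≤ A * (w a / (1 + E ^ 2)) * (m - a) ^ 2 / (4 * exp (κ * (m - a))) := by gcongr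
    _ ≤ w a := by linarith [(div_nonneg hwa.le (by positivity : 0 ≤ 1 + E ^ 2)).trans hwm]
  exact this.false

theorem pos_on_Ico_of_right_eq_zero (hκ : 0 ≤ κ) (hw : ∀ r ∈ Icc a b, HasDerivAt w (u r) r)
    (hu : ∀ r ∈ Icc a b, HasDerivAt u (g r) r) (hu0 : ∀ r ∈ Icc a b, u r ≤ 0)
    (hg : ∀ r ∈ Icc a b, g r ≤ -(κ * u r)) (hwa : 0 < w a) (hwb : w b = 0) :
    ∀ r ∈ Ico a b, 0 < w r := by
  intro r hr
  have hr' := Ico_subset_Icc_self hr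
  have hwr : 0 ≤ w r := hwb ▸ antitoneOn_Icc_of_hasDerivAt_nonpos hw hu0 hr'
    (right_mem_Icc.2 (hr.1.trans hr.2.le)) hr.2.le
  refine hwr.lt_of_ne' fun hwr0 => ?_
  obtain ⟨η, hη, hη0⟩ : ∃ η ∈ Ioo r b, u η = 0 := by
    obtain ⟨η, hη, hslope⟩ := exists_hasDerivAt_eq_slope w u hr.2
      (fun x hx => (hw x ⟨hr.1.trans hx.1, hx.2⟩).continuousAt.continuousWithinAt)
      fun x hx => hw x ⟨hr.1.trans hx.1.le, hx.2.le⟩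
    exact ⟨η, hη, by rw [hslope, hwb, hwr0, sub_zero, zero_div]⟩
  have slope_nonneg (x : ℝ) (hx : x ∈ Icc a r) : 0 ≤ u x := by
    simpa [hη0] using exp_mul_le_sub_of_mem_Icc hκ le_rfl hu hu0 (by simpa using hg)
      (Icc_subset_Icc_right hr.2.le hx) ⟨hr.1.trans hη.1.le, hη.2.le⟩ (hx.2.trans hη.1.le)
  have := mul_sub_le_sub_of_le_hasDerivAt hr.1
    (fun x hx => hw x (Icc_subset_Icc_right hr.2.le hx)) slope_nonneg
  linarith

end DecreasingProfile

section Ellipticity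

open Filter Topology

/-- The second derivative `m` prescribed by the equation `F r m l = y`. It is unique for `r > 0` and
uniformly elliptic `F`; in the absence of a solution the value is arbitrary. -/
noncomputable def ellipticInv (F : ℝ → ℝ → ℝ → ℝ) (r y l : ℝ) : ℝ :=
  Function.invFun (fun m => F r m l) y

namespace UnifElliptic

variable {n : ℕ} {lam Lam : ℝ} {F : ℝ → ℝ → ℝ → ℝ} {r : ℝ}

theorem lam_le_Lam (h : UnifElliptic n lam Lam F) : lam ≤ Lam := by
  have := h 1 one_pos 0 0 1 0 zero_le_one le_rfl
  linarith

theorem neg_comp_neg (h : UnifElliptic n lam Lam F) :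
    UnifElliptic n lam Lam fun r m l => -F r (-m) (-l) := by
  intro r hr m l s t hs ht
  have := h r hr (-(m + s)) (-(l + t)) s t hs ht
  rw [show -(m + s) + s = -m by ring, show -(l + t) + t = -l by ring] at this
  constructor <;> linarith [this.1, this.2]

theorem mul_sub_le_sub_left (h : UnifElliptic n lam Lam F) (hr : 0 < r) {m m' : ℝ} (hm : m' ≤ m)
    (l : ℝ) : lam * (m - m') ≤ F r m l - F r m' l := by
  simpa using (h r hr m' l (m - m') 0 (sub_nonneg.2 hm) le_rfl).1

theorem sub_left_le_mul_sub (h : UnifElliptic n lam Lam F) (hr : 0 < r) {m m' : ℝ} (hm : m' ≤ m)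
    (l : ℝ) : F r m l - F r m' l ≤ Lam * (m - m') := by
  simpa using (h r hr m' l (m - m') 0 (sub_nonneg.2 hm) le_rfl).2

theorem mul_sub_le_sub_right (h : UnifElliptic n lam Lam F) (hr : 0 < r) (m : ℝ) {l l' : ℝ}
    (hl : l' ≤ l) : lam * ((n - 1) * (l - l')) ≤ F r m l - F r m l' := by
  simpa using (h r hr m l' 0 (l - l') le_rfl (sub_nonneg.2 hl)).1

theorem sub_right_le_mul_sub (h : UnifElliptic n lam Lam F) (hr : 0 < r) (m : ℝ) {l l' : ℝ}
    (hl : l' ≤ l) : F r m l - F r m l' ≤ Lam * ((n - 1) * (l - l')) := by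
  simpa using (h r hr m l' 0 (l - l') le_rfl (sub_nonneg.2 hl)).2

theorem mul_abs_sub_le (h : UnifElliptic n lam Lam F) (hr : 0 < r) (m m' l : ℝ) :
    lam * |m - m'| ≤ |F r m l - F r m' l| := by
  wlog hm : m' ≤ m generalizing m m'
  · rw [abs_sub_comm m, abs_sub_comm (F r m l)]
    exact this m' m (le_of_not_ge hm)
  rw [abs_of_nonneg (sub_nonneg.2 hm)]
  exact (h.mul_sub_le_sub_left hr hm l).trans (le_abs_self _)

theorem continuous_left (h : UnifElliptic n lam Lam F) (hlam : 0 ≤ lam) (hr : 0 < r) (l : ℝ) :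
    Continuous fun m => F r m l := by
  refine (LipschitzWith.of_le_add_mul Lam.toNNReal fun m m' => ?_).continuous
  rw [Real.coe_toNNReal _ (hlam.trans h.lam_le_Lam), Real.dist_eq]
  rcases le_total m' m with hm | hm
  · rw [abs_of_nonneg (sub_nonneg.2 hm)]
    linarith [h.sub_left_le_mul_sub hr hm l]
  · have := mul_nonneg hlam (sub_nonneg.2 hm)
    have := mul_nonneg (hlam.trans h.lam_le_Lam) (abs_nonneg (m - m'))
    linarith [h.mul_sub_le_sub_left hr hm l]

theorem abs_sub_right_le (h : UnifElliptic n lam Lam F) (hlam : 0 ≤ lam) (hn : 1 ≤ n) (hr : 0 < r)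
    (m l l' : ℝ) : |F r m l - F r m l'| ≤ Lam * (n - 1) * |l - l'| := by
  have hn' : (0 : ℝ) ≤ n - 1 := sub_nonneg.2 (Nat.one_le_cast.2 hn)
  wlog hl : l' ≤ l generalizing l l'
  · rw [abs_sub_comm, abs_sub_comm l]
    exact this l' l (le_of_not_ge hl)
  have h0 : 0 ≤ lam * ((n - 1) * (l - l')) := by
    have := sub_nonneg.2 hl
    positivity
  rw [abs_of_nonneg (h0.trans (h.mul_sub_le_sub_right hr m hl)), abs_of_nonneg (sub_nonneg.2 hl),
    mul_assoc]
  exact h.sub_right_le_mul_sub hr m hl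

theorem div_le_of_nonpos (h : UnifElliptic n lam Lam F) (hlam : 0 < lam) (hn : 1 ≤ n) (hr : 0 < r)
    (hF0 : F r 0 0 = 0) {m l : ℝ} (hl : l ≤ 0) (hm : F r m l ≤ 0) : F r m l / lam ≤ m := by
  have hn' : (0 : ℝ) ≤ n - 1 := sub_nonneg.2 (Nat.one_le_cast.2 hn)
  rcases le_total 0 m with hm0 | hm0
  · exact (div_nonpos_of_nonpos_of_nonneg hm hlam.le).trans hm0
  · have hm_le := h.mul_sub_le_sub_left hr hm0 l
    have hl_le := h.mul_sub_le_sub_right hr 0 hl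
    have : 0 ≤ lam * ((n - 1) * (0 - l)) := by
      have := sub_nonneg.2 hl
      positivity
    rw [div_le_iff₀ hlam]
    linarith

theorem le_neg_mul_add_div_of_nonpos (h : UnifElliptic n lam Lam F) (hlam : 0 < lam) (hn : 1 ≤ n)
    (hr : 0 < r) (hF0 : F r 0 0 = 0) {m l : ℝ} (hl : l ≤ 0) (hm : F r m l ≤ 0) :
    m ≤ -(Lam * (n - 1) / lam * l) + F r m l / Lam := by
  have hn' : (0 : ℝ) ≤ n - 1 := sub_nonneg.2 (Nat.one_le_cast.2 hn)
  have hLam : 0 < Lam := hlam.trans_le h.lam_le_Lam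
  have hl' : 0 ≤ (n - 1) * -l := mul_nonneg hn' (neg_nonneg.2 hl)
  have hl_le := h.sub_right_le_mul_sub hr 0 hl
  rcases le_total 0 m with hm0 | hm0
  · have hm_le := h.mul_sub_le_sub_left hr hm0 l
    calc m ≤ (Lam * ((n - 1) * -l) + F r m l) / lam := by
          rw [le_div_iff₀ hlam]
          linarith
      _ = -(Lam * (n - 1) / lam * l) + F r m l / lam := by ring
      _ ≤ -(Lam * (n - 1) / lam * l) + F r m l / Lam := by
          refine add_le_add le_rfl ((div_le_div_iff₀ hlam hLam).2 ?_)
          exact mul_le_mul_of_nonpos_left h.lam_le_Lam hm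
  · have hm_le := h.sub_left_le_mul_sub hr hm0 l
    have h_ratio : (n - 1) * -l ≤ Lam * (n - 1) / lam * -l := by
      calc (n - 1) * -l ≤ Lam / lam * ((n - 1) * -l) :=
            le_mul_of_one_le_left hl' ((one_le_div hlam).2 h.lam_le_Lam)
        _ = Lam * (n - 1) / lam * -l := by ring
    have : -(F r m l / Lam) ≤ -m + (n - 1) * -l := by
      rw [← neg_div, div_le_iff₀ hLam]
      linarith
    linarith

theorem surjective_left (h : UnifElliptic n lam Lam F) (hlam : 0 < lam) (hr : 0 < r) (l : ℝ) :
    Function.Surjective fun m => F r m l := by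
  refine (h.continuous_left hlam.le hr l).surjective ?_ ?_
  · refine tendsto_atTop_mono' _ (f₁ := fun m => lam * m + F r 0 l) ?_
      (tendsto_atTop_add_const_right _ _ (tendsto_id.const_mul_atTop hlam))
    filter_upwards [eventually_ge_atTop 0] with m hm
    linarith [h.mul_sub_le_sub_left hr hm l]
  · refine tendsto_atBot_mono' _ (f₁ := fun m => lam * m + F r 0 l) ?_
      (tendsto_atBot_add_const_right _ _ (tendsto_id.const_mul_atBot hlam))
    filter_upwards [eventually_le_atBot 0] with m hm
    linarith [h.mul_sub_le_sub_left hr hm l]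

theorem apply_ellipticInv (h : UnifElliptic n lam Lam F) (hlam : 0 < lam) (hr : 0 < r) (y l : ℝ) :
    F r (ellipticInv F r y l) l = y :=
  Function.invFun_eq (h.surjective_left hlam hr l y)

theorem ellipticInv_zero (h : UnifElliptic n lam Lam F) (hlam : 0 < lam) (hr : 0 < r)
    (hF0 : F r 0 0 = 0) : ellipticInv F r 0 0 = 0 := by
  have := h.mul_abs_sub_le hr (ellipticInv F r 0 0) 0 0
  rw [h.apply_ellipticInv hlam hr, hF0, sub_zero, sub_zero, abs_zero] at this
  exact abs_nonpos_iff.1 (nonpos_of_mul_nonpos_right this hlam)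

theorem lipschitzWith_ellipticInv (h : UnifElliptic n lam Lam F) (hlam : 0 < lam) (hn : 1 ≤ n)
    (hr : 0 < r) : LipschitzWith ((1 + Lam * (n - 1)) / lam).toNNReal
      fun q : ℝ × ℝ => ellipticInv F r q.1 q.2 := by
  have hn' : (0 : ℝ) ≤ n - 1 := sub_nonneg.2 (Nat.one_le_cast.2 hn)
  have hLam : 0 < Lam := hlam.trans_le h.lam_le_Lam
  refine LipschitzWith.of_dist_le_mul fun ⟨y, l⟩ ⟨y', l'⟩ => ?_
  have h_left := h.mul_abs_sub_le hr (ellipticInv F r y l) (ellipticInv F r y' l') l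
  have h_right := h.abs_sub_right_le hlam.le hn hr (ellipticInv F r y' l') l' l
  rw [h.apply_ellipticInv hlam hr] at h_left h_right
  rw [Real.coe_toNNReal _ (by positivity), Prod.dist_eq, div_mul_eq_mul_div, le_div_iff₀' hlam]
  simp only [Real.dist_eq]
  calc lam * |ellipticInv F r y l - ellipticInv F r y' l'|
      ≤ |y - F r (ellipticInv F r y' l') l| := h_left
    _ ≤ |y - y'| + |y' - F r (ellipticInv F r y' l') l| := abs_sub_le _ _ _
    _ ≤ |y - y'| + Lam * (n - 1) * |l - l'| := by
        rw [abs_sub_comm l]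
        gcongr
    _ ≤ (1 + Lam * (n - 1)) * max |y - y'| |l - l'| := by
        rw [add_mul, one_mul]
        gcongr
        exacts [le_max_left _ _, le_max_right _ _]

theorem continuousOn_ellipticInv (h : UnifElliptic n lam Lam F) (hlam : 0 < lam)
    (hFcont : ∀ m l, ContinuousOn (fun r => F r m l) (Ioi 0)) (y l : ℝ) :
    ContinuousOn (fun r => ellipticInv F r y l) (Ioi 0) := by
  intro r hr
  have h_lim : Tendsto (fun s => |F s (ellipticInv F r y l) l - y| / lam) (𝓝[Ioi 0] r) (𝓝 0) := by
    simpa [h.apply_ellipticInv hlam hr, sub_eq_add_neg] using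
      ((hFcont (ellipticInv F r y l) l r hr).tendsto.sub_const y).abs.div_const lam
  refine tendsto_iff_dist_tendsto_zero.2
    (squeeze_zero' (Eventually.of_forall fun _ => dist_nonneg) ?_ h_lim)
  filter_upwards [self_mem_nhdsWithin] with s hs
  rw [dist_comm, Real.dist_eq, le_div_iff₀' hlam]
  simpa [h.apply_ellipticInv hlam hs] using
    h.mul_abs_sub_le hs (ellipticInv F r y l) (ellipticInv F s y l) l

theorem continuousOn_ellipticInv_prod (h : UnifElliptic n lam Lam F) (hlam : 0 < lam)
    (hn : 1 ≤ n) (hFcont : ∀ m l, ContinuousOn (fun r => F r m l) (Ioi 0)) :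
    ContinuousOn (fun q : ℝ × ℝ × ℝ => ellipticInv F q.1 q.2.1 q.2.2) (Ioi 0 ×ˢ univ) :=
  continuousOn_prod_of_continuousOn_lipschitzOnWith' _ _
    (fun _ hr => (h.lipschitzWith_ellipticInv hlam hn hr).lipschitzOnWith)
    fun q _ => h.continuousOn_ellipticInv hlam hFcont q.1 q.2

end UnifElliptic

end Ellipticity

section Flow

open scoped NNReal
open Metric

theorem exists_flow_of_lipschitzWith_of_bounded {E : Type*} [NormedAddCommGroup E]
    [NormedSpace ℝ E] [CompleteSpace E] {v : ℝ → E → E} {tmin t₀ tmax C : ℝ} {K : ℝ≥0}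
    (ht₀ : t₀ ∈ Icc tmin tmax) (hlip : ∀ t ∈ Icc tmin tmax, LipschitzWith K (v t))
    (hcont : ∀ x, ContinuousOn (fun t => v t x) (Icc tmin tmax))
    (hbound : ∀ t ∈ Icc tmin tmax, ∀ x, ‖v t x‖ ≤ C) (x₀ : E) (R : ℝ≥0) :
    ∃ α : E → ℝ → E,
      (∀ x ∈ closedBall x₀ R, α x t₀ = x ∧
        (∀ t ∈ Ioo tmin tmax, HasDerivAt (α x) (v t (α x t)) t) ∧
        ContinuousOn (fun t => v t (α x t)) (Icc tmin tmax)) ∧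
      ∀ t ∈ Icc tmin tmax, ContinuousOn (fun x => α x t) (closedBall x₀ R) := by
  have hT : 0 ≤ max (tmax - t₀) (t₀ - tmin) := le_max_of_le_left (sub_nonneg.2 ht₀.2)
  have hpl : IsPicardLindelof v (⟨t₀, ht₀⟩ : Icc tmin tmax) x₀
      (C.toNNReal * (max (tmax - t₀) (t₀ - tmin)).toNNReal + R) R C.toNNReal K :=
    { lipschitzOnWith := fun t ht => (hlip t ht).lipschitzOnWith
      continuousOn := fun x _ => hcont x
      norm_le := fun t ht x _ => (hbound t ht x).trans (Real.le_coe_toNNReal C)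
      mul_max_le := by simp [Real.coe_toNNReal _ hT] }
  obtain ⟨α, hα, L, hL⟩ :=
    hpl.exists_forall_mem_closedBall_eq_hasDerivWithinAt_lipschitzOnWith
  have hv : ContinuousOn (Function.uncurry v) (Icc tmin tmax ×ˢ univ) :=
    continuousOn_prod_of_continuousOn_lipschitzOnWith' _ K
      (fun t ht => (hlip t ht).lipschitzOnWith) fun x _ => hcont x
  refine ⟨α, fun x hx => ⟨(hα x hx).1, fun t ht => ?_, ?_⟩, fun t ht => (hL t ht).continuousOn⟩
  · exact ((hα x hx).2 t (Ioo_subset_Icc_self ht)).hasDerivAt (Icc_mem_nhds ht.1 ht.2)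
  · exact hv.comp (continuousOn_id.prodMk fun t ht => ((hα x hx).2 t ht).continuousWithinAt)
      fun t ht => ⟨ht, mem_univ _⟩

end Flow

section DecreasingNeumannSolution

open scoped NNReal

/-- The rate `κ` in the inequality `w'' ≤ -κ w' - f(w)/Λ` satisfied on `r ≥ a` by the nonincreasing
solutions of `-F(r, w'', w'/r) = f(w)`. It accounts for the dependence of `F` on `w'/r`. -/
noncomputable def dampingRate (n : ℕ) (lam Lam a : ℝ) : ℝ := Lam * (n - 1) / lam / a

theorem dampingRate_nonneg {n : ℕ} {lam Lam a : ℝ} (hn : 1 ≤ n) (hlam : 0 ≤ lam) (hLam : 0 ≤ Lam)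
    (ha : 0 ≤ a) : 0 ≤ dampingRate n lam Lam a := by
  have : (0 : ℝ) ≤ n - 1 := sub_nonneg.2 (Nat.one_le_cast.2 hn)
  unfold dampingRate
  positivity

/-- A nonincreasing `C²` solution `w` of `-F(r, w'', w'/r) = f(w)` on `[a, b]` with `w'(a) = 0`;
its derivatives `w'` and `w''` are carried as separate functions. -/
structure IsDecreasingNeumannSolution (F : ℝ → ℝ → ℝ → ℝ) (f : ℝ → ℝ) (a b : ℝ)
    (w w' w'' : ℝ → ℝ) : Prop where
  hasDerivAt : ∀ r ∈ Icc a b, HasDerivAt w (w' r) r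
  hasDerivAt_deriv : ∀ r ∈ Icc a b, HasDerivAt w' (w'' r) r
  continuousOn : ContinuousOn w'' (Icc a b)
  deriv_left : w' a = 0
  deriv_nonpos : ∀ r ∈ Icc a b, w' r ≤ 0
  apply_eq : ∀ r ∈ Icc a b, F r (w'' r) (w' r / r) = -f (w r)

variable {n : ℕ} {lam Lam : ℝ} {F : ℝ → ℝ → ℝ → ℝ} {f : ℝ → ℝ} {a b : ℝ}

namespace IsDecreasingNeumannSolution

variable {w w' w'' : ℝ → ℝ}

theorem antitoneOn (hw : IsDecreasingNeumannSolution F f a b w w' w'') : AntitoneOn w (Icc a b) :=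
  antitoneOn_Icc_of_hasDerivAt_nonpos hw.hasDerivAt hw.deriv_nonpos

theorem congr_nonlinearity {g : ℝ → ℝ} (hw : IsDecreasingNeumannSolution F f a b w w' w'')
    (hfg : ∀ r ∈ Icc a b, f (w r) = g (w r)) : IsDecreasingNeumannSolution F g a b w w' w'' where
  __ := hw
  apply_eq r hr := by rw [← hfg r hr, hw.apply_eq r hr]

theorem neg_div_le (hw : IsDecreasingNeumannSolution F f a b w w' w'')
    (hF : UnifElliptic n lam Lam F) (hlam : 0 < lam) (hn : 1 ≤ n) (hF0 : ∀ r > 0, F r 0 0 = 0)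
    (ha : 0 < a) (hf : ∀ s, 0 ≤ f s) {r : ℝ} (hr : r ∈ Icc a b) : -(f (w r) / lam) ≤ w'' r := by
  have hr0 : 0 < r := ha.trans_le hr.1
  have := hF.div_le_of_nonpos hlam hn hr0 (hF0 r hr0)
    (div_nonpos_of_nonpos_of_nonneg (hw.deriv_nonpos r hr) hr0.le)
    ((hw.apply_eq r hr).trans_le (neg_nonpos.2 (hf _)))
  rwa [hw.apply_eq r hr, neg_div] at this

theorem le_neg_mul_sub_div (hw : IsDecreasingNeumannSolution F f a b w w' w'')
    (hF : UnifElliptic n lam Lam F) (hlam : 0 < lam) (hn : 1 ≤ n) (hF0 : ∀ r > 0, F r 0 0 = 0)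
    (ha : 0 < a) (hf : ∀ s, 0 ≤ f s) {r : ℝ} (hr : r ∈ Icc a b) :
    w'' r ≤ -(dampingRate n lam Lam a * w' r) - f (w r) / Lam := by
  have hr0 : 0 < r := ha.trans_le hr.1
  have hw' : w' r ≤ 0 := hw.deriv_nonpos r hr
  have hLam : 0 < Lam := hlam.trans_le hF.lam_le_Lam
  have hn' : (0 : ℝ) ≤ n - 1 := sub_nonneg.2 (Nat.one_le_cast.2 hn)
  calc w'' r
      ≤ -(Lam * (n - 1) / lam * (w' r / r)) + F r (w'' r) (w' r / r) / Lam :=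
        hF.le_neg_mul_add_div_of_nonpos hlam hn hr0 (hF0 r hr0)
          (div_nonpos_of_nonpos_of_nonneg hw' hr0.le)
          ((hw.apply_eq r hr).trans_le (neg_nonpos.2 (hf _)))
    _ = Lam * (n - 1) / lam / r * -w' r - f (w r) / Lam := by
        rw [hw.apply_eq r hr]
        ring
    _ ≤ Lam * (n - 1) / lam / a * -w' r - f (w r) / Lam := by
        have := neg_nonneg.2 hw'
        gcongr
        exact hr.1
    _ = -(dampingRate n lam Lam a * w' r) - f (w r) / Lam := by
        rw [dampingRate]
        ring

theorem right_nonneg (hw : IsDecreasingNeumannSolution F f a b w w' w'')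
    (hF : UnifElliptic n lam Lam F) (hlam : 0 < lam) (hn : 1 ≤ n) (hF0 : ∀ r > 0, F r 0 0 = 0)
    (ha : 0 < a) (hab : a ≤ b) (hf : ∀ s, 0 ≤ f s) {C : ℝ} (hfC : ∀ s ≤ w a, f s ≤ C)
    (hC : C * (b - a) ^ 2 ≤ lam * w a) : 0 ≤ w b := by
  have hwr_le (r : ℝ) (hr : r ∈ Icc a b) : w r ≤ w a :=
    hw.antitoneOn (left_mem_Icc.2 hab) hr hr.1
  have h_drop := sub_le_mul_sq_of_neg_le hab (div_nonneg ((hf _).trans (hfC _ le_rfl)) hlam.le)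
    hw.deriv_left hw.hasDerivAt hw.hasDerivAt_deriv fun r hr =>
      (neg_le_neg (div_le_div_of_nonneg_right (hfC _ (hwr_le r hr)) hlam.le)).trans
        (hw.neg_div_le hF hlam hn hF0 ha hf hr)
  rw [div_mul_eq_mul_div] at h_drop
  linarith [(div_le_iff₀' hlam).2 hC]

theorem right_neg (hw : IsDecreasingNeumannSolution F f a b w w' w'')
    (hF : UnifElliptic n lam Lam F) (hlam : 0 < lam) (hn : 1 ≤ n) (hF0 : ∀ r > 0, F r 0 0 = 0)
    (ha : 0 < a) (hab : a ≤ b) (hf : ∀ s, 0 ≤ f s) (hwa : 0 < w a) {E A : ℝ}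
    (hE : exp (dampingRate n lam Lam a * (b - a)) = E)
    (hA : 16 * E * (1 + E ^ 2) * Lam < A * (b - a) ^ 2)
    (hAf : ∀ s ∈ Icc (w a / (1 + E ^ 2)) (w a), A * s ≤ f s) : w b < 0 := by
  subst hE
  have hLam : 0 < Lam := hlam.trans_le hF.lam_le_Lam
  refine right_neg_of_mul_le (φ := fun s => f s / Lam) (A := A / Lam) hab
    (dampingRate_nonneg hn hlam.le hLam.le ha.le) hw.deriv_left hw.hasDerivAt hw.hasDerivAt_deriv
    hw.deriv_nonpos (fun s => div_nonneg (hf s) hLam.le)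
    (fun r hr => hw.le_neg_mul_sub_div hF hlam hn hF0 ha hf hr) hwa ?_ fun s hs => ?_
  · rwa [div_mul_eq_mul_div, lt_div_iff₀ hLam]
  · rw [div_mul_eq_mul_div]
    exact div_le_div_of_nonneg_right (hAf s hs) hLam.le

theorem pos_of_right_eq_zero (hw : IsDecreasingNeumannSolution F f a b w w' w'')
    (hF : UnifElliptic n lam Lam F) (hlam : 0 < lam) (hn : 1 ≤ n) (hF0 : ∀ r > 0, F r 0 0 = 0)
    (ha : 0 < a) (hf : ∀ s, 0 ≤ f s) (hwa : 0 < w a) (hwb : w b = 0) :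
    ∀ r ∈ Ico a b, 0 < w r := by
  have hLam : 0 < Lam := hlam.trans_le hF.lam_le_Lam
  exact pos_on_Ico_of_right_eq_zero (dampingRate_nonneg hn hlam.le hLam.le ha.le) hw.hasDerivAt
    hw.hasDerivAt_deriv hw.deriv_nonpos (fun r hr => (hw.le_neg_mul_sub_div hF hlam hn hF0 ha hf
      hr).trans (sub_le_self _ (div_nonneg (hf _) hLam.le))) hwa hwb

end IsDecreasingNeumannSolution

/-- The vector field of the equation `-F(t, w'', w'/t) = f(w)`, as a first order system for
`x = (w, w')`, in which the slope is truncated to `[m, 0]`. The truncation makes the field bounded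
and, for suitable `m`, is inactive along the solutions with `w' = 0` initially. -/
noncomputable def truncatedField (F : ℝ → ℝ → ℝ → ℝ) (f : ℝ → ℝ) {m : ℝ} (hm : m ≤ 0) (t : ℝ)
    (x : ℝ × ℝ) : ℝ × ℝ :=
  (projIcc m 0 hm x.2, ellipticInv F t (-f x.1) (projIcc m 0 hm x.2 / t))

theorem exists_lipschitzWith_truncatedField (hF : UnifElliptic n lam Lam F) (hlam : 0 < lam)
    (hn : 1 ≤ n) {L : ℝ≥0} (hf : LipschitzWith L f) {m : ℝ} (hm : m ≤ 0) {t₀ : ℝ} (ht₀ : 0 < t₀) :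
    ∃ K, ∀ t, t₀ ≤ t → LipschitzWith K (truncatedField F f hm t) := by
  have h_proj : LipschitzWith 1 fun x : ℝ × ℝ => (projIcc m 0 hm x.2 : ℝ) := by
    simpa [Function.comp_def] using
      (LipschitzWith.subtype_val _).comp ((LipschitzWith.projIcc hm).comp LipschitzWith.prod_snd)
  refine ⟨_, fun t ht => h_proj.prodMk
    ((hF.lipschitzWith_ellipticInv hlam hn (ht₀.trans_le ht)).comp
      ((hf.comp LipschitzWith.prod_fst).neg.prodMk (Kg := t₀⁻¹.toNNReal) ?_))⟩
  refine LipschitzWith.of_dist_le_mul fun x y => ?_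
  have ht0 : 0 < t := ht₀.trans_le ht
  have h_dist : |(projIcc m 0 hm x.2 : ℝ) - projIcc m 0 hm y.2| ≤ dist x y := by
    simpa [Real.dist_eq] using h_proj.dist_le_mul x y
  rw [Real.coe_toNNReal _ (inv_nonneg.2 ht₀.le), Real.dist_eq, ← sub_div, abs_div, abs_of_pos ht0,
    div_eq_inv_mul]
  gcongr

theorem exists_norm_truncatedField_le (hF : UnifElliptic n lam Lam F) (hlam : 0 < lam)
    (hn : 1 ≤ n) (hF0 : ∀ r > 0, F r 0 0 = 0) {B : ℝ} (hf : ∀ s, f s ∈ Icc 0 B) {m : ℝ}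
    (hm : m ≤ 0) {t₀ : ℝ} (ht₀ : 0 < t₀) :
    ∃ C, ∀ t, t₀ ≤ t → ∀ x, ‖truncatedField F f hm t x‖ ≤ C := by
  refine ⟨max (-m) (((1 + Lam * (n - 1)) / lam).toNNReal * max B (-m / t₀)), fun t ht x => ?_⟩
  have ht0 : 0 < t := ht₀.trans_le ht
  have h_slope : |(projIcc m 0 hm x.2 : ℝ)| ≤ -m := by
    rw [abs_of_nonpos (projIcc m 0 hm x.2).2.2]
    exact neg_le_neg (projIcc m 0 hm x.2).2.1
  refine max_le_max h_slope ?_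
  have := (hF.lipschitzWith_ellipticInv hlam hn ht0).norm_sub_le
    (-f x.1, (projIcc m 0 hm x.2 : ℝ) / t) 0
  simp only [Prod.fst_zero, Prod.snd_zero, hF.ellipticInv_zero hlam ht0 (hF0 t ht0),
    sub_zero] at this
  refine this.trans (mul_le_mul_of_nonneg_left (max_le_max ?_ ?_) (NNReal.coe_nonneg _))
  · simpa [abs_of_nonneg (hf x.1).1] using (hf x.1).2
  · rw [norm_div, Real.norm_of_nonneg ht0.le]
    exact div_le_div₀ (neg_nonneg.2 hm) h_slope ht₀ ht

theorem continuousOn_truncatedField (hF : UnifElliptic n lam Lam F) (hlam : 0 < lam) (hn : 1 ≤ n)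
    (hFcont : ∀ m l, ContinuousOn (fun r => F r m l) (Ioi 0)) {m : ℝ} (hm : m ≤ 0) (x : ℝ × ℝ) :
    ContinuousOn (fun t => truncatedField F f hm t x) (Ioi 0) :=
  continuousOn_const.prodMk ((hF.continuousOn_ellipticInv_prod hlam hn hFcont).comp
    (continuousOn_id.prodMk (continuousOn_const.prodMk
      (continuousOn_const.div continuousOn_id fun _ ht => ht.ne'))) fun _ ht => ⟨ht, mem_univ _⟩)

theorem mem_Icc_of_truncated_eq (hF : UnifElliptic n lam Lam F) (hlam : 0 < lam) (hn : 1 ≤ n)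
    (hF0 : ∀ r > 0, F r 0 0 = 0) (ha : 0 < a) {u g φ : ℝ → ℝ} {m B : ℝ} {hm : m ≤ 0}
    (hu : ∀ r ∈ Icc a b, HasDerivAt u (g r) r) (hua : u a = 0)
    (hg : ∀ r ∈ Icc a b, F r (g r) (projIcc m 0 hm (u r) / r) = -φ r)
    (hφ : ∀ r ∈ Icc a b, φ r ∈ Icc 0 B) (hmB : m ≤ -(B / lam * (b - a))) :
    ∀ r ∈ Icc a b, u r ∈ Icc m 0 := by
  have u_nonpos : ∀ r ∈ Icc a b, u r ≤ 0 :=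
    nonpos_of_hasDerivAt_nonpos_of_nonneg hu hua.le fun r hr hur => by
      have hr0 : 0 < r := ha.trans_le hr.1
      have h_eq := hg r hr
      rw [projIcc_of_right_le hm hur, zero_div] at h_eq
      have := hF.le_neg_mul_add_div_of_nonpos hlam hn hr0 (hF0 r hr0) le_rfl
        (h_eq.trans_le (neg_nonpos.2 (hφ r hr).1))
      rw [h_eq, mul_zero, neg_zero, zero_add] at this
      exact this.trans (div_nonpos_of_nonpos_of_nonneg (neg_nonpos.2 (hφ r hr).1)
        (hlam.le.trans hF.lam_le_Lam))
  have g_ge (r : ℝ) (hr : r ∈ Icc a b) : -(B / lam) ≤ g r := by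
    have hr0 : 0 < r := ha.trans_le hr.1
    have := hF.div_le_of_nonpos hlam hn hr0 (hF0 r hr0)
      (div_nonpos_of_nonpos_of_nonneg (projIcc m 0 hm (u r)).2.2 hr0.le)
      ((hg r hr).trans_le (neg_nonpos.2 (hφ r hr).1))
    rw [hg r hr, neg_div] at this
    exact (neg_le_neg (div_le_div_of_nonneg_right (hφ r hr).2 hlam.le)).trans this
  intro r hr
  have hsub : Icc a r ⊆ Icc a b := Icc_subset_Icc_right hr.2
  have h_drop := mul_sub_le_sub_of_le_hasDerivAt hr.1 (fun t ht => hu t (hsub ht))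
    fun t ht => g_ge t (hsub ht)
  have hB : 0 ≤ B / lam := div_nonneg ((hφ r hr).1.trans (hφ r hr).2) hlam.le
  exact ⟨by nlinarith [hr.2], u_nonpos r hr⟩

theorem exists_isDecreasingNeumannSolution (hF : UnifElliptic n lam Lam F) (hlam : 0 < lam)
    (hn : 1 ≤ n) (hFcont : ∀ m l, ContinuousOn (fun r => F r m l) (Ioi 0))
    (hF0 : ∀ r > 0, F r 0 0 = 0) (ha : 0 < a) (hab : a ≤ b) {L : ℝ≥0} (hf : LipschitzWith L f)
    {B : ℝ} (hfB : ∀ s, f s ∈ Icc 0 B) (R : ℝ≥0) :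
    ∃ w w' w'' : ℝ → ℝ → ℝ,
      (∀ s ∈ Icc (-R : ℝ) R, w s a = s ∧
        IsDecreasingNeumannSolution F f a b (w s) (w' s) (w'' s)) ∧
      ContinuousOn (fun s => w s b) (Icc (-R) R) := by
  have hB : 0 ≤ B := (hfB 0).1.trans (hfB 0).2
  have hm : -(B / lam * (b - a)) ≤ 0 :=
    neg_nonpos.2 (mul_nonneg (div_nonneg hB hlam.le) (sub_nonneg.2 hab))
  obtain ⟨K, hK⟩ := exists_lipschitzWith_truncatedField hF hlam hn hf hm (half_pos ha)
  obtain ⟨C, hC⟩ := exists_norm_truncatedField_le hF hlam hn hF0 hfB hm (half_pos ha)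
  obtain ⟨α, hα, hα_cont⟩ := exists_flow_of_lipschitzWith_of_bounded
    (v := truncatedField F f hm) (tmin := a / 2) (t₀ := a) (tmax := b + 1)
    ⟨by linarith, by linarith⟩ (fun t ht => hK t ht.1)
    (fun x => (continuousOn_truncatedField hF hlam hn hFcont hm x).mono
      fun t ht => (half_pos ha).trans_le ht.1)
    (fun t ht => hC t ht.1) 0 R
  have hsub : Icc a b ⊆ Ioo (a / 2) (b + 1) := Icc_subset_Ioo (by linarith) (by linarith)
  have h_ball : ∀ s ∈ Icc (-R : ℝ) R, ((s, 0) : ℝ × ℝ) ∈ Metric.closedBall (0 : ℝ × ℝ) R :=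
    fun s hs => by simpa [Prod.norm_def] using abs_le.2 hs
  refine ⟨fun s r => (α (s, 0) r).1, fun s r => (α (s, 0) r).2,
    fun s r => (truncatedField F f hm r (α (s, 0) r)).2, fun s hs => ?_, ?_⟩
  · obtain ⟨h_init, h_deriv, h_cont⟩ := hα _ (h_ball s hs)
    have hw' (r : ℝ) (hr : r ∈ Icc a b) : HasDerivAt (fun r => (α (s, 0) r).2)
        (truncatedField F f hm r (α (s, 0) r)).2 r := (h_deriv r (hsub hr)).snd
    have h_eq (r : ℝ) (hr : r ∈ Icc a b) := hF.apply_ellipticInv hlam (ha.trans_le hr.1)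
      (-f (α (s, 0) r).1) (projIcc _ 0 hm (α (s, 0) r).2 / r)
    have h_slope := mem_Icc_of_truncated_eq hF hlam hn hF0 ha hw' (congrArg Prod.snd h_init) h_eq
      (fun r _ => hfB _) le_rfl
    exact ⟨congrArg Prod.fst h_init,
      { hasDerivAt := fun r hr => by
          have : HasDerivAt (fun r => (α (s, 0) r).1) (projIcc _ 0 hm (α (s, 0) r).2 : ℝ) r :=
            (h_deriv r (hsub hr)).fst
          rwa [projIcc_of_mem hm (h_slope r hr)] at this
        hasDerivAt_deriv := hw'
        continuousOn := h_cont.snd.mono (hsub.trans Ioo_subset_Icc_self)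
        deriv_left := congrArg Prod.snd h_init
        deriv_nonpos := fun r hr => (h_slope r hr).2
        apply_eq := fun r hr => by
          simpa only [truncatedField, projIcc_of_mem hm (h_slope r hr)] using h_eq r hr }⟩
  · exact ((hα_cont b ⟨by linarith, by linarith⟩).comp (by fun_prop) h_ball).fst

theorem exists_isDecreasingNeumannSolution_right_eq_zero (hF : UnifElliptic n lam Lam F)
    (hlam : 0 < lam) (hn : 1 ≤ n) (hFcont : ∀ m l, ContinuousOn (fun r => F r m l) (Ioi 0))
    (hF0 : ∀ r > 0, F r 0 0 = 0) (ha : 0 < a) (hab : a ≤ b) {L : ℝ≥0} (hf : LipschitzWith L f)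
    {B : ℝ} (hfB : ∀ s, f s ∈ Icc 0 B) {σ Γ C E A : ℝ} (hσ : 0 < σ) (hσΓ : σ ≤ Γ)
    (hfC : ∀ s ≤ σ, f s ≤ C) (hC : C * (b - a) ^ 2 ≤ lam * σ)
    (hE : exp (dampingRate n lam Lam a * (b - a)) = E)
    (hA : 16 * E * (1 + E ^ 2) * Lam < A * (b - a) ^ 2)
    (hAf : ∀ s ∈ Icc (Γ / (1 + E ^ 2)) Γ, A * s ≤ f s) :
    ∃ w w' w'' : ℝ → ℝ, IsDecreasingNeumannSolution F f a b w w' w'' ∧ w a ∈ Icc σ Γ ∧ w b = 0 := by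
  have hΓ : 0 < Γ := hσ.trans_le hσΓ
  obtain ⟨w, w', w'', hw, hw_cont⟩ := exists_isDecreasingNeumannSolution hF hlam hn hFcont hF0 ha
    hab hf hfB Γ.toNNReal
  rw [Real.coe_toNNReal Γ hΓ.le] at hw hw_cont
  have hsub : Icc σ Γ ⊆ Icc (-Γ) Γ := Icc_subset_Icc_left (by linarith)
  obtain ⟨hσa, hσ_sol⟩ := hw σ (hsub (left_mem_Icc.2 hσΓ))
  obtain ⟨hΓa, hΓ_sol⟩ := hw Γ (hsub (right_mem_Icc.2 hσΓ))
  have hσ_right : 0 ≤ w σ b := hσ_sol.right_nonneg hF hlam hn hF0 ha hab (fun s => (hfB s).1)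
    (by rwa [hσa]) (by rwa [hσa])
  have hΓ_right : w Γ b < 0 := hΓ_sol.right_neg hF hlam hn hF0 ha hab (fun s => (hfB s).1)
    (by rwa [hΓa]) hE hA (by rwa [hΓa])
  obtain ⟨s, hs, hsb⟩ : ∃ s ∈ Icc σ Γ, w s b = 0 :=
    intermediate_value_Icc' hσΓ (hw_cont.mono hsub) ⟨hΓ_right.le, hσ_right⟩
  obtain ⟨hsa, hs_sol⟩ := hw s (hsub hs)
  exact ⟨w s, w' s, w'' s, hs_sol, by rwa [hsa], hsb⟩

end DecreasingNeumannSolution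

section IccExtend

variable {f : ℝ → ℝ} {x y C : ℝ}

theorem exists_lipschitzWith_IccExtend (hxy : x ≤ y) (hf : LocallyLipschitzOn (Icc x y) f) :
    ∃ L, LipschitzWith L (IccExtend hxy fun s => f s) := by
  obtain ⟨L, hL⟩ := hf.exists_lipschitzOnWith_of_compact isCompact_Icc
  exact ⟨_, hL.to_restrict.comp (LipschitzWith.projIcc hxy)⟩

theorem exists_IccExtend_mem_Icc (hxy : x ≤ y) (hf : ContinuousOn f (Icc x y))
    (hC : ∀ s ∈ Icc x y, C ≤ f s) : ∃ B, ∀ s, IccExtend hxy (fun s => f s) s ∈ Icc C B := by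
  obtain ⟨B, hB⟩ := isCompact_Icc.bddAbove_image hf
  exact ⟨B, fun s => ⟨hC _ (projIcc x y hxy s).2,
    hB (mem_image_of_mem f (projIcc x y hxy s).2)⟩⟩

theorem IccExtend_le_of_le (hxy : x ≤ y) {s σ : ℝ} (hσ : x ≤ σ) (hC : ∀ t ∈ Icc x σ, f t ≤ C)
    (hs : s ≤ σ) : IccExtend hxy (fun s => f s) s ≤ C := by
  refine hC _ ⟨(projIcc x y hxy s).2.1, ?_⟩
  rw [coe_projIcc]
  exact max_le hσ ((min_le_right y s).trans hs)

end IccExtend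

section Superlinear

open Filter Topology Asymptotics

/-- A nonlinearity on `[0, ∞)` that is nonnegative, locally Lipschitz, `o(s)` as `s → 0` (so
`f 0 = 0`) and such that `s = o(f s)` as `s → ∞`. Values at negative arguments are irrelevant. -/
structure IsSuperlinear (f : ℝ → ℝ) : Prop where
  locallyLipschitzOn : LocallyLipschitzOn (Ici 0) f
  nonneg : ∀ s ≥ 0, 0 ≤ f s
  isLittleO_zero : f =o[𝓝[≥] 0] id
  isLittleO_atTop : id =o[atTop] f

theorem isSuperlinear_rpow {p : ℝ} (hp : 1 < p) : IsSuperlinear fun s => s ^ p := by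
  have hp' : 0 < p - 1 := sub_pos.2 hp
  have h_mul (s : ℝ) (hs : 0 ≤ s) : s ^ p = s ^ (p - 1) * s := by
    rw [← rpow_add_one' hs (by linarith), sub_add_cancel]
  refine ⟨?_, fun s hs => rpow_nonneg hs p, ?_, ?_⟩
  · have : ContDiff ℝ 1 fun s : ℝ => s ^ p :=
      contDiff_rpow_const_of_le (by exact_mod_cast hp.le)
    exact this.locallyLipschitz.locallyLipschitzOn
  · have h_lim : Tendsto (fun s : ℝ => s ^ (p - 1)) (𝓝[≥] 0) (𝓝 0) := by
      simpa [zero_rpow hp'.ne'] using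
        ((continuous_rpow_const hp'.le).tendsto (0 : ℝ)).mono_left nhdsWithin_le_nhds
    refine isLittleO_iff_exists_eq_mul.2 ⟨_, h_lim, ?_⟩
    filter_upwards [self_mem_nhdsWithin] with s hs using h_mul s hs
  · refine isLittleO_iff.2 fun c hc => ?_
    filter_upwards [eventually_ge_atTop 0, (tendsto_rpow_atTop hp').eventually_ge_atTop c⁻¹]
      with s hs hsc
    rw [h_mul s hs, norm_mul, Real.norm_of_nonneg (rpow_nonneg hs _), id, ← mul_assoc]
    exact le_mul_of_one_le_left (norm_nonneg s) ((inv_le_iff_one_le_mul₀' hc).1 hsc)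

namespace IsSuperlinear

variable {f : ℝ → ℝ}

theorem exists_le_mul (hf : IsSuperlinear f) {ε : ℝ} (hε : 0 < ε) :
    ∃ δ > 0, ∀ s ∈ Icc 0 δ, f s ≤ ε * s := by
  obtain ⟨δ, hδ, hδε⟩ := mem_nhdsGE_iff_exists_Icc_subset.1 (hf.isLittleO_zero.def hε)
  refine ⟨δ, hδ, fun s hs => (le_abs_self _).trans ?_⟩
  simpa [abs_of_nonneg hs.1] using hδε hs

theorem exists_mul_le (hf : IsSuperlinear f) {A : ℝ} (hA : 0 < A) :
    ∃ S > 0, ∀ s ≥ S, A * s ≤ f s := by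
  obtain ⟨S, hS⟩ := eventually_atTop.1 (hf.isLittleO_atTop.def (inv_pos.2 hA))
  refine ⟨max S 1, lt_max_of_lt_right one_pos, fun s hs => ?_⟩
  have hs0 : 0 ≤ s := zero_le_one.trans ((le_max_right S 1).trans hs)
  have := hS s ((le_max_left S 1).trans hs)
  rwa [id, Real.norm_of_nonneg hs0, Real.norm_of_nonneg (hf.nonneg s hs0),
    le_inv_mul_iff₀ hA] at this

theorem exists_pos_solution (hf : IsSuperlinear f) {n : ℕ} {lam Lam : ℝ} {F : ℝ → ℝ → ℝ → ℝ}
    {a b : ℝ} (hF : UnifElliptic n lam Lam F) (hlam : 0 < lam) (hn : 1 ≤ n)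
    (hFcont : ∀ m l, ContinuousOn (fun r => F r m l) (Ioi 0)) (hF0 : ∀ r > 0, F r 0 0 = 0)
    (ha : 0 < a) (hab : a < b) :
    ∃ w w' w'' : ℝ → ℝ, IsDecreasingNeumannSolution F f a b w w' w'' ∧ w b = 0 ∧
      ∀ r ∈ Ico a b, 0 < w r := by
  have hba : 0 < (b - a) ^ 2 := pow_pos (sub_pos.2 hab) 2
  have hLam : 0 < Lam := hlam.trans_le hF.lam_le_Lam
  obtain ⟨E, hE⟩ : ∃ E, exp (dampingRate n lam Lam a * (b - a)) = E := ⟨_, rfl⟩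
  have hE0 : 0 < E := hE ▸ exp_pos _
  obtain ⟨A, hA⟩ := exists_gt (16 * E * (1 + E ^ 2) * Lam / (b - a) ^ 2)
  obtain ⟨S, hS, hAf⟩ := hf.exists_mul_le ((by positivity : (0 : ℝ) ≤ _).trans_lt hA)
  obtain ⟨δ, hδ, hfδ⟩ := hf.exists_le_mul (div_pos hlam hba)
  set Γ := (1 + E ^ 2) * S
  have hΓ : 0 < Γ := by positivity
  set σ := min δ Γ
  have hσ : 0 < σ := lt_min hδ hΓ
  set f₁ := IccExtend hΓ.le fun s => f s
  have hf_lip : LocallyLipschitzOn (Icc 0 Γ) f := hf.locallyLipschitzOn.mono Icc_subset_Ici_self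
  have hf₁ (s : ℝ) (hs : s ∈ Icc 0 Γ) : f₁ s = f s := IccExtend_of_mem hΓ.le _ hs
  obtain ⟨L, hL⟩ := exists_lipschitzWith_IccExtend hΓ.le hf_lip
  obtain ⟨B, hB⟩ := exists_IccExtend_mem_Icc hΓ.le hf_lip.continuousOn fun s hs => hf.nonneg s hs.1
  have hΓS : Γ / (1 + E ^ 2) = S := mul_div_cancel_left₀ S (by positivity)
  obtain ⟨w, w', w'', hw, hwa, hwb⟩ := exists_isDecreasingNeumannSolution_right_eq_zero hF hlam hn
    hFcont hF0 ha hab.le hL hB hσ (min_le_right δ Γ)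
    (fun s => IccExtend_le_of_le hΓ.le hσ.le fun t ht =>
      (hfδ t ⟨ht.1, ht.2.trans (min_le_left δ Γ)⟩).trans
        (mul_le_mul_of_nonneg_left ht.2 (div_pos hlam hba).le))
    (by rw [mul_right_comm, div_mul_cancel₀ _ hba.ne']) hE ((div_lt_iff₀ hba).1 hA)
    (fun s hs => by
      rw [hΓS] at hs
      exact (hAf s hs.1).trans_eq (hf₁ s ⟨hS.le.trans hs.1, hs.2⟩).symm)
  have hwr (r : ℝ) (hr : r ∈ Icc a b) : w r ∈ Icc 0 Γ :=
    ⟨hwb ▸ hw.antitoneOn hr (right_mem_Icc.2 hab.le) hr.2,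
      (hw.antitoneOn (left_mem_Icc.2 hab.le) hr hr.1).trans hwa.2⟩
  exact ⟨w, w', w'', hw.congr_nonlinearity fun r hr => hf₁ _ (hwr r hr), hwb,
    hw.pos_of_right_eq_zero hF hlam hn hF0 ha (fun s => (hB s).1) (hσ.trans_le hwa.1) hwb⟩

end IsSuperlinear

end Superlinear

theorem mixed_bvp_neumann_dirichlet_annulus_general {n : ℕ} (hn : 1 ≤ n) {lam Lam : ℝ}
    (hlam : 0 < lam) {F : ℝ → ℝ → ℝ → ℝ}
    (hFcont : ∀ m l, ContinuousOn (fun r => F r m l) (Ioi 0)) (hF0 : ∀ r > 0, F r 0 0 = 0)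
    (hFell : UnifElliptic n lam Lam F) {f : ℝ → ℝ} (hf : IsSuperlinear f) {a b : ℝ} (ha : 0 < a)
    (hab : a < b) :
    (∃ w w' w'' : ℝ → ℝ,
      (∀ r ∈ Icc a b, HasDerivAt w (w' r) r) ∧
      (∀ r ∈ Icc a b, HasDerivAt w' (w'' r) r) ∧
      ContinuousOn w'' (Icc a b) ∧
      w' a = 0 ∧ w b = 0 ∧
      (∀ r ∈ Ico a b, 0 < w r) ∧
      (∀ r ∈ Ioo a b, -F r (w'' r) (w' r / r) = f (w r))) ∧
    (∃ w w' w'' : ℝ → ℝ,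
      (∀ r ∈ Icc a b, HasDerivAt w (w' r) r) ∧
      (∀ r ∈ Icc a b, HasDerivAt w' (w'' r) r) ∧
      ContinuousOn w'' (Icc a b) ∧
      w' a = 0 ∧ w b = 0 ∧
      (∀ r ∈ Ico a b, w r < 0) ∧
      (∀ r ∈ Ioo a b, -F r (w'' r) (w' r / r) = -f |w r|)) := by
  constructor
  · obtain ⟨w, w', w'', hw, hwb, hw_pos⟩ :=
      hf.exists_pos_solution hFell hlam hn hFcont hF0 ha hab
    refine ⟨w, w', w'', hw.hasDerivAt, hw.hasDerivAt_deriv, hw.continuousOn, hw.deriv_left, hwb,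
      hw_pos, fun r hr => ?_⟩
    rw [hw.apply_eq r (Ioo_subset_Icc_self hr), neg_neg]
  · obtain ⟨v, v', v'', hv, hvb, hv_pos⟩ := hf.exists_pos_solution hFell.neg_comp_neg hlam hn
      (fun m l => (hFcont (-m) (-l)).neg) (fun r hr => by simp [hF0 r hr]) ha hab
    refine ⟨-v, -v', -v'', fun r hr => (hv.hasDerivAt r hr).neg,
      fun r hr => (hv.hasDerivAt_deriv r hr).neg, hv.continuousOn.neg, by simp [hv.deriv_left],
      by simp [hvb], fun r hr => neg_neg_of_pos (hv_pos r hr), fun r hr => ?_⟩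
    have h_eq := hv.apply_eq r (Ioo_subset_Icc_self hr)
    rw [Pi.neg_apply, Pi.neg_apply, Pi.neg_apply, abs_neg,
      abs_of_pos (hv_pos r (Ioo_subset_Ico_self hr)), neg_div, h_eq]

/-- Theorem (mixed boundary value problem, Neumann at `|x| = a`, Dirichlet at `|x| = b`):
`F(x,D²u) + |u|^{p−1}u = 0` in `A_{a,b}`, `∂u/∂n = 0` on `|x| = a`, `u = 0` on `|x| = b`,
has a positive and a negative radial solution. -/
theorem mixed_bvp_neumann_dirichlet_annulus
    (n : ℕ) (hn : 2 ≤ n) (lam Lam p : ℝ) (hlam : 0 < lam) (hlL : lam ≤ Lam) (hp : 1 < p)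
    (F : ℝ → ℝ → ℝ → ℝ)
    (hFcont : Continuous fun x : ℝ × ℝ × ℝ => F x.1 x.2.1 x.2.2)
    (hF0 : ∀ r : ℝ, F r 0 0 = 0)
    (hFell : UnifElliptic n lam Lam F)
    (a b : ℝ) (ha : 0 < a) (hab : a < b) :
    (∃ w w' w'' : ℝ → ℝ,
      (∀ r ∈ Icc a b, HasDerivAt w (w' r) r) ∧
      (∀ r ∈ Icc a b, HasDerivAt w' (w'' r) r) ∧
      ContinuousOn w'' (Icc a b) ∧
      w' a = 0 ∧ w b = 0 ∧
      (∀ r ∈ Ico a b, 0 < w r) ∧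
      (∀ r ∈ Ioo a b, -F r (w'' r) (w' r / r) = w r ^ p)) ∧
    (∃ w w' w'' : ℝ → ℝ,
      (∀ r ∈ Icc a b, HasDerivAt w (w' r) r) ∧
      (∀ r ∈ Icc a b, HasDerivAt w' (w'' r) r) ∧
      ContinuousOn w'' (Icc a b) ∧
      w' a = 0 ∧ w b = 0 ∧
      (∀ r ∈ Ico a b, w r < 0) ∧
      (∀ r ∈ Ioo a b, -F r (w'' r) (w' r / r) = -(|w r| ^ p))) :=
  mixed_bvp_neumann_dirichlet_annulus_general (one_le_two.trans hn) hlam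
    (fun m l => (hFcont.comp (.prodMk_left (m, l))).continuousOn) (fun r _ => hF0 r) hFell
    (isSuperlinear_rpow hp) ha hab
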